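/- Fix n ≥ 2 and let S be a finite subset of SL(n, ℤ) whose elements generate SL(n, ℤ) as a group. For each L, among the |S|^L words w : Fin L → S, let G(L) be the number of words whose product M_w has the property that the characteristic polynomial of the underlying integer matrix of M_w has full symmetric Galois group over ℚ. Then G(L) / |S|^L tends to 1 as L tends to infinity. -/

import Mathlib

/-!
Reduction modulo finitely many primes maps the random walk onto a finite product of groups
`SL ι 𝔽_p`. This product is perfect, so the walk has no periodicity obstruction and equidistributes
in it; the reductions at different primes are then asymptotically independent. Matrices with a
prescribed characteristic polynomial are counted through cyclic vectors, so that a given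
factorization type of the characteristic polynomial has frequency at least `c / p` among the
elements of `SL ι 𝔽_p`. As `∑ 1 / p` diverges, almost every word shows this type at some prime.

Two types suffice. If the reduction is a linear factor times an irreducible one, Hensel's lemma
lifts the factorization to `ℚ_[p]`, and conjugation over `ℚ_[p]` makes the stabilizer of one root
transitive on the others: the action is doubly transitive. If it is a product of distinct
linear factors and an irreducible quadratic, the same lift yields a transposition, and a primitive
group containing a transposition is the full symmetric group. For irreducibility, the first type
leaves room only for an integer root, which divides the constant coefficient `±1`; this is excluded
by asking, along with the second type, that `±1` are not roots modulo `p`.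
-/

section Aperiodicity

open Pointwise

variable {H : Type*} [Group H] [DecidableEq H]

theorem exists_smul_pow_eq_pow_succ [Finite H] (T : Finset H) :
    ∃ k, ∀ t ∈ T, t • T ^ k = T ^ (k + 1) ∧ MulOpposite.op t • T ^ k = T ^ (k + 1) := by
  have left_subset (k : ℕ) : ∀ t ∈ T, t • T ^ k ⊆ T ^ (k + 1) := fun t ht ↦ by
    rw [pow_succ']
    exact Finset.smul_finset_subset_smul ht
  have right_subset (k : ℕ) : ∀ t ∈ T, MulOpposite.op t • T ^ k ⊆ T ^ (k + 1) := fun t ht ↦ by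
    rw [pow_succ]
    exact Finset.op_smul_finset_subset_mul ht
  obtain ⟨k, hk⟩ : ∃ k, ∀ t ∈ T, (T ^ (k + 1)).card ≤ (T ^ k).card := by
    have := Fintype.ofFinite H
    by_contra! h
    have hlt : StrictMono fun k ↦ (T ^ k).card :=
      strictMono_nat_of_lt_succ fun k ↦ (h k).choose_spec.2
    have := hlt.le_apply (x := Fintype.card H + 1)
    have := Finset.card_le_univ (T ^ (Fintype.card H + 1))
    omega
  refine ⟨k, fun t ht ↦ ⟨?_, ?_⟩⟩
  · exact Finset.eq_of_subset_of_card_le (left_subset k t ht) (by simpa using hk t ht)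
  · exact Finset.eq_of_subset_of_card_le (right_subset k t ht) (by simpa using hk t ht)

theorem stabilizer_eq_top_of_smul_eq_op_smul [Group.IsPerfect H] {T A B : Finset H}
    (hT : T.Nonempty) (hgen : Subgroup.closure (T : Set H) = ⊤)
    (hleft : ∀ t ∈ T, t • A = B) (hright : ∀ t ∈ T, MulOpposite.op t • A = B) :
    MulAction.stabilizer H A = ⊤ := by
  set K := MulAction.stabilizer H A
  have conj_mem_iff : ∀ t ∈ T, ∀ h, t⁻¹ * h * t ∈ K ↔ h ∈ K := fun t ht h ↦ by
    rw [MulAction.mem_stabilizer_iff, MulAction.mem_stabilizer_iff, mul_smul, mul_smul,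
      inv_smul_eq_iff, hleft t ht, ← hright t ht, smul_comm, smul_left_cancel_iff]
  have : K.Normal := by
    rw [← Subgroup.normalizer_eq_top_iff, eq_top_iff, ← hgen, Subgroup.closure_le]
    intro t ht
    rw [SetLike.mem_coe, Subgroup.mem_normalizer_iff]
    intro h
    rw [← conj_mem_iff t ht (t * h * t⁻¹)]
    simp [mul_assoc]
  obtain ⟨t₀, ht₀⟩ := hT
  have hsup : K ⊔ Subgroup.zpowers t₀ = ⊤ := by
    rw [eq_top_iff, ← hgen, Subgroup.closure_le]
    intro t ht
    have hmem : t * t₀⁻¹ ∈ K := by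
      rw [← conj_mem_iff t₀ ht₀, MulAction.mem_stabilizer_iff, mul_assoc, inv_mul_cancel_right,
        mul_smul, hleft t ht, inv_smul_eq_iff, hleft t₀ ht₀]
    rw [← inv_mul_cancel_right t t₀]
    exact mul_mem (Subgroup.mem_sup_left hmem) (Subgroup.mem_sup_right (Subgroup.mem_zpowers t₀))
  rw [eq_top_iff, ← Group.IsPerfect.commutator_eq_top]
  exact Subgroup.Normal.commutator_le_of_self_sup_commutative_eq_top hsup inferInstance

theorem exists_pow_eq_univ [Fintype H] [Group.IsPerfect H] {T : Finset H} (hT : T.Nonempty)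
    (hgen : Subgroup.closure (T : Set H) = ⊤) :
    ∃ k : ℕ, T ^ k = Finset.univ := by
  obtain ⟨k, hk⟩ := exists_smul_pow_eq_pow_succ T
  have hstab : MulAction.stabilizer H (T ^ k) = ⊤ :=
    stabilizer_eq_top_of_smul_eq_op_smul hT hgen (fun t ht ↦ (hk t ht).1) fun t ht ↦ (hk t ht).2
  obtain ⟨a, ha⟩ := hT.pow (n := k)
  refine ⟨k, Finset.eq_univ_of_forall fun x ↦ ?_⟩
  have hx : (x * a⁻¹) • T ^ k = T ^ k :=
    MulAction.mem_stabilizer_iff.mp (hstab ▸ Subgroup.mem_top (x * a⁻¹))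
  rw [← hx]
  simpa using Finset.smul_mem_smul_finset (a := x * a⁻¹) ha

end Aperiodicity

section RandomWalk

open Filter Topology BigOperators

variable {ι G H : Type*}

/-- The product `M_w` of the letters of a word `w` in the alphabet `ι`, the letter `i` standing for
the group element `s i`. -/
def wordProd [Monoid G] (s : ι → G) {L : ℕ} (w : Fin L → ι) : G :=
  (List.ofFn fun i ↦ s (w i)).prod

theorem map_wordProd [Monoid G] [Monoid H] (π : G →* H) (s : ι → G) {L : ℕ} (w : Fin L → ι) :
    π (wordProd s w) = wordProd (π ∘ s) w := by
  simp [wordProd, map_list_prod, List.map_ofFn, Function.comp_def]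

theorem wordProd_append [Monoid G] (s : ι → G) {L M : ℕ} (v : Fin L → ι) (w : Fin M → ι) :
    wordProd s (Fin.append v w) = wordProd s v * wordProd s w := by
  simp only [wordProd, ← List.prod_append, ← List.ofFn_fin_append]
  congr 2
  funext i
  refine Fin.addCases (fun i ↦ ?_) (fun i ↦ ?_) i <;> simp

theorem exists_length_forall_exists_wordProd_eq [Group H] [Finite H] [Group.IsPerfect H]
    [Finite ι] [Nonempty ι] {s : ι → H} (hs : Subgroup.closure (Set.range s) = ⊤) :
    ∃ k, ∀ h : H, ∃ w : Fin k → ι, wordProd s w = h := by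
  classical
  have := Fintype.ofFinite H
  have := Fintype.ofFinite ι
  obtain ⟨k, hk⟩ := exists_pow_eq_univ (Finset.univ_nonempty.image s) (by simpa using hs)
  refine ⟨k, fun h ↦ ?_⟩
  obtain ⟨f, hf⟩ := Finset.mem_pow.mp (hk ▸ Finset.mem_univ h)
  choose w hw using fun i ↦ Finset.mem_image.mp (f i).2
  exact ⟨w, by simpa only [wordProd, (hw _).2] using hf⟩

variable [Fintype ι]

section Contraction

variable [Group H]

/-- The average of `φ (M_w * h)` over all words `w` of length `L`. -/
noncomputable def wordAverage (s : ι → H) (L : ℕ) (φ : H → ℝ) (h : H) : ℝ :=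
  𝔼 w : Fin L → ι, φ (wordProd s w * h)

theorem wordAverage_add (s : ι → H) (L M : ℕ) (φ : H → ℝ) :
    wordAverage s (L + M) φ = wordAverage s M (wordAverage s L φ) := by
  funext h
  simp only [wordAverage, ← mul_assoc, ← wordProd_append]
  rw [Finset.expect_comm, ← Finset.expect_product', Finset.univ_product_univ]
  exact (Fintype.expect_equiv (Fin.appendEquiv L M) _ _ fun _ ↦ rfl).symm

variable [Fintype H]

theorem sum_wordAverage_eq_zero (s : ι → H) (L : ℕ) {φ : H → ℝ} (hφ : ∑ h, φ h = 0) :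
    ∑ h, wordAverage s L φ h = 0 := by
  simp only [wordAverage]
  rw [← Finset.expect_sum_comm]
  refine Finset.expect_eq_zero fun w _ ↦ ?_
  rw [← hφ]
  exact Equiv.sum_comp (Equiv.mulLeft _) φ

variable [Nonempty ι]

theorem norm_wordAverage_le (s : ι → H) (L : ℕ) (φ : H → ℝ) : ‖wordAverage s L φ‖ ≤ ‖φ‖ :=
  (pi_norm_le_iff_of_nonneg (norm_nonneg φ)).mpr fun _ ↦ (RCLike.norm_expect_le (K := ℝ)).trans
    (Finset.expect_le Finset.univ_nonempty fun _ _ ↦ norm_le_pi_norm φ _)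

-- One word for each element of `H` may be discarded: together they contribute `∑ h, φ h = 0`.
theorem norm_wordAverage_le_of_forall_exists_wordProd_eq {s : ι → H} {k : ℕ}
    (hk : ∀ h : H, ∃ w : Fin k → ι, wordProd s w = h) {φ : H → ℝ} (hφ : ∑ h, φ h = 0) :
    ‖wordAverage s k φ‖ ≤ (1 - Fintype.card H / (Fintype.card ι : ℝ) ^ k) * ‖φ‖ := by
  classical
  choose w hw using hk
  have hinj : Function.Injective w := fun a b hab ↦ by rw [← hw a, ← hw b, hab]
  set W := Finset.univ.map ⟨w, hinj⟩
  have hW : (Wᶜ.card : ℝ) = (Fintype.card ι : ℝ) ^ k - Fintype.card H := by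
    rw [Finset.card_compl, Nat.cast_sub (Finset.card_le_univ W)]
    simp [W]
  have hpos : (0 : ℝ) < (Fintype.card ι : ℝ) ^ k := by positivity
  have hr : 1 - Fintype.card H / (Fintype.card ι : ℝ) ^ k = Wᶜ.card / (Fintype.card ι : ℝ) ^ k := by
    rw [hW, sub_div, div_self hpos.ne']
  rw [hr]
  refine (pi_norm_le_iff_of_nonneg (by positivity)).mpr fun h ↦ ?_
  have hsum : ∑ v ∈ W, φ (wordProd s v * h) = 0 := by
    simp only [W, Finset.sum_map, Function.Embedding.coeFn_mk, hw]
    rw [← hφ]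
    exact Equiv.sum_comp (Equiv.mulRight h) φ
  rw [wordAverage, Fintype.expect_eq_sum_div_card, ← Finset.sum_add_sum_compl W, hsum, zero_add,
    norm_div, div_mul_eq_mul_div]
  simp only [Fintype.card_fun, Fintype.card_fin, Nat.cast_pow, Real.norm_of_nonneg hpos.le]
  gcongr
  refine (norm_sum_le _ _).trans ?_
  simpa using Finset.sum_le_sum fun v (_ : v ∈ Wᶜ) ↦ norm_le_pi_norm φ (wordProd s v * h)

theorem tendsto_norm_wordAverage [Group.IsPerfect H] {s : ι → H}
    (hs : Subgroup.closure (Set.range s) = ⊤) {φ : H → ℝ} (hφ : ∑ h, φ h = 0) :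
    Tendsto (fun L ↦ ‖wordAverage s L φ‖) atTop (𝓝 0) := by
  obtain ⟨k, hk⟩ := exists_length_forall_exists_wordProd_eq hs
  set r : ℝ := 1 - Fintype.card H / (Fintype.card ι : ℝ) ^ k
  have hr₁ : r < 1 := sub_lt_self _ (by positivity)
  have hr₀ : 0 ≤ r := by
    have hsurj : Function.Surjective fun w : Fin k → ι ↦ wordProd s w := hk
    rw [sub_nonneg, div_le_one (by positivity)]
    exact_mod_cast (Fintype.card_le_of_surjective _ hsurj).trans_eq (by simp)
  have hpow (q : ℕ) : ‖wordAverage s (k * q) φ‖ ≤ r ^ q * ‖φ‖ := by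
    induction q with
    | zero => simpa using norm_wordAverage_le s 0 φ
    | succ q ih =>
      rw [Nat.mul_succ, wordAverage_add, pow_succ', mul_assoc]
      exact (norm_wordAverage_le_of_forall_exists_wordProd_eq hk
        (sum_wordAverage_eq_zero s _ hφ)).trans (mul_le_mul_of_nonneg_left ih hr₀)
  have hanti : Antitone fun L ↦ ‖wordAverage s L φ‖ := antitone_nat_of_succ_le fun L ↦ by
    rw [wordAverage_add]
    exact norm_wordAverage_le s 1 _
  refine tendsto_order.mpr
    ⟨fun a ha ↦ .of_forall fun L ↦ ha.trans_le (norm_nonneg _), fun ε hε ↦ ?_⟩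
  have hlim : Tendsto (fun q ↦ r ^ q * ‖φ‖) atTop (𝓝 0) := by
    simpa using (tendsto_pow_atTop_nhds_zero_of_lt_one hr₀ hr₁).mul_const ‖φ‖
  obtain ⟨q, hq⟩ := (hlim.eventually (gt_mem_nhds hε)).exists
  filter_upwards [eventually_ge_atTop (k * q)] with L hL
  exact (hanti hL).trans_lt ((hpow q).trans_lt hq)

end Contraction

section Frequency

variable [Monoid G]

open scoped Classical in
/-- The proportion of words of length `L` whose product lies in `A`. -/
noncomputable def wordFrequency (s : ι → G) (A : Set G) (L : ℕ) : ℝ :=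
  (Finset.univ.filter fun w : Fin L → ι ↦ wordProd s w ∈ A).card / (Fintype.card ι : ℝ) ^ L

theorem wordFrequency_nonneg (s : ι → G) (A : Set G) (L : ℕ) : 0 ≤ wordFrequency s A L := by
  unfold wordFrequency
  positivity

theorem wordFrequency_mono (s : ι → G) {A B : Set G} (h : A ⊆ B) (L : ℕ) :
    wordFrequency s A L ≤ wordFrequency s B L := by
  unfold wordFrequency
  gcongr

theorem wordFrequency_union_le (s : ι → G) (A B : Set G) (L : ℕ) :
    wordFrequency s (A ∪ B) L ≤ wordFrequency s A L + wordFrequency s B L := by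
  classical
  rw [wordFrequency, wordFrequency, wordFrequency, ← add_div]
  gcongr
  simp only [Set.mem_union, Finset.filter_or]
  exact_mod_cast Finset.card_union_le _ _

theorem wordFrequency_add_compl [Nonempty ι] (s : ι → G) (A : Set G) (L : ℕ) :
    wordFrequency s A L + wordFrequency s Aᶜ L = 1 := by
  classical
  rw [wordFrequency, wordFrequency, ← add_div, div_eq_one_iff_eq (by positivity)]
  simp only [Set.mem_compl_iff]
  exact_mod_cast (Finset.card_filter_add_card_filter_not _).trans (by simp)

theorem wordFrequency_preimage [Monoid H] (s : ι → G) (π : G →* H) (A : Set H) :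
    wordFrequency s (π ⁻¹' A) = wordFrequency (π ∘ s) A := by
  have hmem {L : ℕ} (w : Fin L → ι) : wordProd s w ∈ π ⁻¹' A ↔ wordProd (π ∘ s) w ∈ A := by
    rw [Set.mem_preimage, map_wordProd]
  funext L
  unfold wordFrequency
  congr! 4 with w
  exact hmem w

theorem tendsto_wordFrequency [Group H] [Finite H] [Group.IsPerfect H] [Nonempty ι] {s : ι → H}
    (hs : Subgroup.closure (Set.range s) = ⊤) (A : Set H) :
    Tendsto (wordFrequency s A) atTop (𝓝 (A.ncard / Nat.card H)) := by
  classical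
  have := Fintype.ofFinite H
  set c : ℝ := A.ncard / Nat.card H
  set φ : H → ℝ := fun g ↦ A.indicator 1 g - c with hφ
  have hsum : ∑ g, φ g = 0 := by
    have hA : ∑ g, A.indicator (1 : H → ℝ) g = A.ncard := by
      simp [Set.indicator_apply, Set.ncard_eq_toFinset_card', Set.toFinset]
    have hH : (Nat.card H : ℝ) ≠ 0 := by exact_mod_cast Nat.card_pos.ne'
    rw [Finset.sum_sub_distrib, hA, Finset.sum_const, Finset.card_univ, ← Nat.card_eq_fintype_card,
      nsmul_eq_mul, mul_div_cancel₀ _ hH, sub_self]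
  have hfreq (L : ℕ) : wordFrequency s A L = wordAverage s L φ 1 + c := by
    rw [wordAverage]
    simp only [hφ, mul_one]
    rw [Finset.expect_sub_distrib, Finset.expect_const Finset.univ_nonempty, sub_add_cancel]
    simp [Fintype.expect_eq_sum_div_card, Set.indicator_apply, wordFrequency]
  simp only [funext hfreq]
  simpa using (squeeze_zero_norm (fun L ↦ norm_le_pi_norm (wordAverage s L φ) 1)
    (tendsto_norm_wordAverage hs hsum)).add_const c

/-- The filter of the sets that contain the product `M_w` of almost every word `w`, in the sense
that the frequency of words of length `L` with `M_w` outside the set tends to `0`. -/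
def almostEveryWord (s : ι → G) : Filter G :=
  Filter.comk (fun A ↦ Tendsto (wordFrequency s A) atTop (𝓝 0))
    (tendsto_const_nhds.congr fun L ↦ by simp [wordFrequency])
    (fun _ hB _ hAB ↦ squeeze_zero (wordFrequency_nonneg s _) (wordFrequency_mono s hAB) hB)
    (fun A hA B hB ↦ squeeze_zero (wordFrequency_nonneg s _) (wordFrequency_union_le s A B)
      (by simpa using hA.add hB))

theorem mem_almostEveryWord {s : ι → G} {A : Set G} :
    A ∈ almostEveryWord s ↔ Tendsto (wordFrequency s Aᶜ) atTop (𝓝 0) :=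
  .rfl

theorem tendsto_wordFrequency_of_mem_almostEveryWord [Nonempty ι] {s : ι → G} {A : Set G}
    (h : A ∈ almostEveryWord s) : Tendsto (wordFrequency s A) atTop (𝓝 1) := by
  have hA : wordFrequency s A = fun L ↦ 1 - wordFrequency s Aᶜ L :=
    funext fun L ↦ eq_sub_of_add_eq (wordFrequency_add_compl s A L)
  rw [hA]
  simpa using (mem_almostEveryWord.mp h).const_sub 1

end Frequency

section Sieve

instance {κ : Type*} [Finite κ] {K : κ → Type*} [∀ k, Group (K k)] [∀ k, Group.IsPerfect (K k)] :
    Group.IsPerfect (∀ k, K k) where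
  commutator_eq_top := by
    rw [commutator_def]
    have h := Subgroup.commutator_pi_pi_of_finite (fun k ↦ (⊤ : Subgroup (K k))) fun k ↦ ⊤
    simpa only [Subgroup.pi_top, ← commutator_def, Group.IsPerfect.commutator_eq_top] using h

open Real in
theorem exists_prod_one_sub_lt_of_not_summable {κ : Type*} {δ : κ → ℝ} (hδ₀ : 0 ≤ δ) (hδ₁ : δ ≤ 1)
    (hδ : ¬ Summable δ) {ε : ℝ} (hε : 0 < ε) : ∃ P : Finset κ, ∏ k ∈ P, (1 - δ k) < ε := by
  by_contra! h
  refine hδ (summable_of_sum_le (c := -log ε) hδ₀ fun P ↦ ?_)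
  have hexp : ε ≤ exp (-∑ k ∈ P, δ k) := calc
    ε ≤ ∏ k ∈ P, (1 - δ k) := h P
    _ ≤ ∏ k ∈ P, exp (-δ k) := Finset.prod_le_prod (fun k _ ↦ sub_nonneg.mpr (hδ₁ k))
        fun k _ ↦ one_sub_le_exp_neg (δ k)
    _ = exp (-∑ k ∈ P, δ k) := by rw [← exp_sum, Finset.sum_neg_distrib]
  linarith [(log_le_iff_le_exp hε).mpr hexp]

variable {κ : Type*} {K : κ → Type*} [∀ k, Group (K k)] [∀ k, Finite (K k)]
  [∀ k, Group.IsPerfect (K k)]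

theorem tendsto_wordFrequency_pi [Group G] [Nonempty ι] {s : ι → G} {π : ∀ k, G →* K k}
    {P : Finset κ}
    (hπ : ∀ x : ∀ k, K k, ∃ g ∈ Subgroup.closure (Set.range s), ∀ k ∈ P, π k g = x k)
    (B : ∀ k, Set (K k)) :
    Tendsto (wordFrequency s {g | ∀ k ∈ P, π k g ∈ B k}) atTop
      (𝓝 (∏ k ∈ P, ((B k).ncard / Nat.card (K k) : ℝ))) := by
  classical
  set ρ := MonoidHom.pi fun k : P ↦ π k
  have hs : Subgroup.closure (Set.range (ρ ∘ s)) = ⊤ := by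
    rw [Set.range_comp, ← MonoidHom.map_closure, eq_top_iff]
    intro x _
    obtain ⟨g, hg, hgx⟩ := hπ fun k ↦ if hk : k ∈ P then x ⟨k, hk⟩ else 1
    exact ⟨g, hg, funext fun k ↦ (hgx k k.2).trans (dif_pos k.2)⟩
  have hpre : {g | ∀ k ∈ P, π k g ∈ B k} = ρ ⁻¹' Set.univ.pi fun k : P ↦ B k := by
    ext g
    simp [ρ, Set.mem_pi]
  have h := tendsto_wordFrequency hs (Set.univ.pi fun k : P ↦ B k)
  rw [← Nat.card_coe_set_eq, Nat.card_congr (Equiv.Set.univPi _), Nat.card_pi, Nat.card_pi,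
    Nat.cast_prod, Nat.cast_prod, ← Finset.prod_div_distrib] at h
  simpa only [hpre, wordFrequency_preimage, ← P.prod_coe_sort, Nat.card_coe_set_eq] using h

theorem eventually_exists_mem_of_not_summable [Group G] [Nonempty ι] {s : ι → G}
    {π : ∀ k, G →* K k}
    (hπ : ∀ P : Finset κ, ∀ x : ∀ k, K k,
      ∃ g ∈ Subgroup.closure (Set.range s), ∀ k ∈ P, π k g = x k)
    {B : ∀ k, Set (K k)} (hB : ¬ Summable fun k ↦ ((B k).ncard / Nat.card (K k) : ℝ)) :
    ∀ᶠ g in almostEveryWord s, ∃ k, π k g ∈ B k := by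
  refine mem_almostEveryWord.mpr ((tendsto_order (α := ℝ)).mpr
    ⟨fun a ha ↦ .of_forall fun L ↦ ha.trans_le (wordFrequency_nonneg s _ L), fun ε hε ↦ ?_⟩)
  have hcard (k : κ) : (0 : ℝ) < Nat.card (K k) := by exact_mod_cast Nat.card_pos
  obtain ⟨P, hP⟩ := exists_prod_one_sub_lt_of_not_summable (fun k ↦ by positivity)
    (fun k ↦ (div_le_one (hcard k)).mpr (by exact_mod_cast Set.ncard_le_card (B k))) hB hε
  have hlim := tendsto_wordFrequency_pi (hπ P) fun k ↦ (B k)ᶜ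
  have hcompl (k : κ) :
      ((B k)ᶜ.ncard / Nat.card (K k) : ℝ) = 1 - (B k).ncard / Nat.card (K k) := by
    rw [eq_sub_iff_add_eq, ← add_div, div_eq_one_iff_eq (hcard k).ne', add_comm]
    exact_mod_cast Set.ncard_add_ncard_compl (B k)
  simp only [hcompl] at hlim
  filter_upwards [hlim.eventually (gt_mem_nhds hP)] with L hL
  have hsub : {g | ∃ k, π k g ∈ B k}ᶜ ⊆ {g | ∀ k ∈ P, π k g ∈ (B k)ᶜ} :=
    fun g hg k _ hk ↦ hg ⟨k, hk⟩
  exact (wordFrequency_mono s hsub L).trans_lt hL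

end Sieve

end RandomWalk

section SpecialLinear

open Matrix Matrix.SpecialLinearGroup
open scoped commutatorElement

variable {ι F : Type*} [Fintype ι] [DecidableEq ι] [Field F]

theorem map_transvection {R R' : Type*} [CommRing R] [CommRing R'] (f : R →+* R') {i j : ι}
    (hij : i ≠ j) (c : R) :
    SpecialLinearGroup.map f (SpecialLinearGroup.transvection hij c) =
      SpecialLinearGroup.transvection hij (f c) := by
  ext a b
  simp [transvection_coe, Matrix.single_apply, Matrix.one_apply, apply_ite f]

theorem diag2n_eq_prod_transvection {i j : ι} (hij : i ≠ j) {a : F} (ha : a ≠ 0) :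
    diag2n hij a ha = SpecialLinearGroup.transvection hij a *
      SpecialLinearGroup.transvection hij.symm (-a⁻¹) * SpecialLinearGroup.transvection hij a *
      SpecialLinearGroup.transvection hij (-1) * SpecialLinearGroup.transvection hij.symm 1 *
      SpecialLinearGroup.transvection hij (-1) := by
  apply Subtype.ext
  simp only [coe_mul, transvection_coe, diag2n_coe, mul_add, add_mul, mul_one, one_mul,
    single_mul_single_same, single_mul_single_of_ne _ _ _ _ hij,
    single_mul_single_of_ne _ _ _ _ hij.symm, mul_neg, neg_mul, add_zero,
    mul_inv_cancel₀ ha, inv_mul_cancel₀ ha, neg_neg]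
  ext k l
  simp only [Matrix.add_apply, Matrix.single_apply, Matrix.diagonal_apply, Matrix.one_apply]
  grind

theorem commutator_diag2n_transvection {i j : ι} (hij : i ≠ j) {a : F} (ha : a ≠ 0) (b : F) :
    ⁅diag2n hij a ha, SpecialLinearGroup.transvection hij b⁆ =
      SpecialLinearGroup.transvection hij (b * (a ^ 2 - 1)) := by
  rw [commutatorElement_def, mul_inv_eq_iff_eq_mul, mul_inv_eq_iff_eq_mul]
  apply Subtype.ext
  simp only [coe_mul, transvection_coe, diag2n_coe, mul_add, add_mul, mul_one, one_mul,
    single_mul_single_of_ne _ _ _ _ hij.symm]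
  ext k l
  simp only [Matrix.add_apply, Matrix.diagonal_mul, Matrix.mul_diagonal, Matrix.zero_apply,
    Matrix.single_apply, Matrix.diagonal_apply]
  grind

theorem eq_top_of_transvection_mem [Nontrivial ι] {K : Subgroup (SpecialLinearGroup ι F)}
    (hK : ∀ (i j : ι) (hij : i ≠ j) (c : F), SpecialLinearGroup.transvection hij c ∈ K) :
    K = ⊤ := by
  refine eq_top_iff.mpr fun M _ ↦
    diagonal_transvection_induction' (fun A ↦ A ∈ K) M (fun i j hij c hc ↦ ?_) hK
      fun A B ↦ mul_mem
  rw [diag2n_eq_prod_transvection]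
  repeat' apply mul_mem
  all_goals exact hK _ _ _ _

theorem isPerfect_specialLinearGroup [Nontrivial ι] {a : F} (ha₀ : a ≠ 0) (ha₁ : a ^ 2 - 1 ≠ 0) :
    Group.IsPerfect (SpecialLinearGroup ι F) where
  commutator_eq_top := eq_top_of_transvection_mem fun i j hij c ↦ by
    rw [← div_mul_cancel₀ c ha₁, ← commutator_diag2n_transvection hij ha₀]
    exact Subgroup.commutator_mem_commutator (Subgroup.mem_top _) (Subgroup.mem_top _)

theorem surjective_pi_map {R κ : Type*} [CommRing R] [Nontrivial ι] [Finite κ] {K : κ → Type*}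
    [∀ k, Field (K k)] {f : ∀ k, R →+* K k} (hf : Function.Surjective (RingHom.pi f)) :
    Function.Surjective (MonoidHom.pi fun k ↦ SpecialLinearGroup.map (n := ι) (f k)) := by
  classical
  set ρ := MonoidHom.pi fun k ↦ SpecialLinearGroup.map (n := ι) (f k)
  have hcomap (k : κ) : ρ.range.comap (MonoidHom.mulSingle _ k) = ⊤ :=
    eq_top_of_transvection_mem fun i j hij c ↦ by
      obtain ⟨r, hr⟩ := hf (Pi.single k c)
      refine ⟨SpecialLinearGroup.transvection hij r, funext fun l ↦ ?_⟩
      have hrl : f l r = Pi.single k c l := congrFun hr l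
      rw [MonoidHom.pi_apply, map_transvection, hrl, MonoidHom.mulSingle_apply]
      obtain rfl | hl := eq_or_ne l k
      · rw [Pi.single_eq_same, Pi.mulSingle_eq_same]
      · rw [Pi.single_eq_of_ne hl, Pi.mulSingle_eq_of_ne hl, transvection_coeff_zero]
  intro x
  exact Subgroup.pi_mem_of_mulSingle_mem x fun k ↦
    Subgroup.mem_comap.mp (hcomap k ▸ Subgroup.mem_top (x k))

theorem surjective_pi_intCast_zmod {κ : Type*} [Finite κ] {a : κ → ℕ}
    (ha : Pairwise (Function.onFun Nat.Coprime a)) :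
    Function.Surjective (RingHom.pi fun k ↦ Int.castRingHom (ZMod (a k))) := by
  have := Fintype.ofFinite κ
  have h : RingHom.pi (fun k ↦ Int.castRingHom (ZMod (a k))) =
    (ZMod.prodEquivPi a ha).toRingHom.comp (Int.castRingHom _) := Subsingleton.elim _ _
  rw [h]
  exact (ZMod.prodEquivPi a ha).surjective.comp (ZMod.intCast_surjective)

end SpecialLinear

section CharpolyCount

open Polynomial Matrix

variable {ι F : Type*} [Fintype ι] [DecidableEq ι] [Field F]

/-- `v` is a cyclic vector of the matrix `C`: its iterates under `C` span the whole space. -/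
def IsCyclicVector (C : Matrix ι ι F) (v : ι → F) : Prop :=
  Submodule.span F (Set.range fun i : ℕ ↦ (C ^ i) *ᵥ v) = ⊤

theorem exists_charpoly_eq_isCyclicVector {f : F[X]} (hf : f.Monic)
    (hd : f.natDegree = Fintype.card ι) :
    ∃ (C : Matrix ι ι F) (v : ι → F), C.charpoly = f ∧ IsCyclicVector C v := by
  set pb := AdjoinRoot.powerBasis hf.ne_zero
  have hdim : pb.dim = Fintype.card ι := hd
  set e : Fin pb.dim ≃ ι := Fintype.equivOfCardEq (by simpa using hdim)
  set b := pb.basis.reindex e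
  have : Module.Finite F (AdjoinRoot f) := pb.finite
  refine ⟨Algebra.leftMulMatrix b pb.gen, b.equivFun 1, ?_, ?_⟩
  · rw [Algebra.leftMulMatrix_apply, LinearMap.charpoly_toMatrix,
      ← LinearMap.charpoly_toMatrix _ pb.basis]
    exact (charpoly_leftMulMatrix pb).trans (AdjoinRoot.minpoly_powerBasis_gen_of_monic hf)
  · have hpow (i : ℕ) : (Algebra.leftMulMatrix b pb.gen ^ i) *ᵥ b.equivFun 1 =
        b.equivFun (pb.gen ^ i) := by
      rw [← map_pow]
      simpa using Algebra.leftMulMatrix_mulVec_repr b (pb.gen ^ i) 1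
    simp only [IsCyclicVector, hpow]
    rw [eq_top_iff, ← (Pi.basisFun F ι).span_eq, Submodule.span_le]
    rintro _ ⟨k, rfl⟩
    have hbk : pb.gen ^ (e.symm k : ℕ) = b k := by rw [← pb.basis_eq_pow, pb.basis.reindex_apply]
    exact Submodule.subset_span ⟨e.symm k, by simp [hbk, Finsupp.single_eq_pi_single]⟩

theorem IsCyclicVector.injective_conj_mulVec {C : Matrix ι ι F} {v : ι → F}
    (hv : IsCyclicVector C v) :
    Function.Injective fun g : GL ι F ↦
      ((g : Matrix ι ι F) * C * (g⁻¹ : GL ι F), (g : Matrix ι ι F) *ᵥ v) := by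
  intro g h hgh
  obtain ⟨hconj, hvec⟩ := Prod.mk.inj hgh
  have mulVec_iterate (x : GL ι F) (i : ℕ) : (x : Matrix ι ι F) *ᵥ ((C ^ i) *ᵥ v) =
      ((x : Matrix ι ι F) * C * ((x⁻¹ : GL ι F) : Matrix ι ι F)) ^ i *ᵥ
        ((x : Matrix ι ι F) *ᵥ v) := by
    rw [Units.conj_pow, mulVec_mulVec, mulVec_mulVec, mul_assoc, Units.inv_mul, mul_one]
  refine Units.ext (toLin'.injective (LinearMap.ext_on_range hv fun i ↦ ?_))
  simp only [toLin'_apply, mulVec_iterate, hconj, hvec]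

theorem card_GL_eq [Nonempty ι] [Finite F] :
    Nat.card (GL ι F) = (Nat.card F - 1) * Nat.card (SpecialLinearGroup ι F) := by
  set d : GL ι F →* Fˣ := GeneralLinearGroup.det
  have hker : Nat.card d.ker = Nat.card (SpecialLinearGroup ι F) := by
    have hrange : d.ker = (SpecialLinearGroup.toGL (n := ι) (R := F)).range :=
      SetLike.coe_injective SpecialLinearGroup.range_toGL.symm
    rw [hrange]
    exact (Nat.card_congr (MonoidHom.ofInjective SpecialLinearGroup.toGL_injective).toEquiv).symm
  rw [← Subgroup.card_mul_index d.ker, hker, Subgroup.index_ker, MonoidHom.range_eq_top.mpr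
    GeneralLinearGroup.det_surjective, Subgroup.card_top, Nat.card_units, mul_comm]

/-- The possible characteristic polynomials of matrices in `SL ι R`. -/
def specialCharpolys (ι R : Type*) [Fintype ι] [CommRing R] : Set R[X] :=
  {f | f.Monic ∧ f.natDegree = Fintype.card ι ∧ f.coeff 0 = (-1) ^ Fintype.card ι}

theorem ncard_mul_card_GL_le [Finite F] {P : Set F[X]} (hP : P ⊆ specialCharpolys ι F) :
    P.ncard * Nat.card (GL ι F) ≤
      {M : SpecialLinearGroup ι F | (M : Matrix ι ι F).charpoly ∈ P}.ncard *
        Nat.card F ^ Fintype.card ι := by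
  have hC (f : P) := exists_charpoly_eq_isCyclicVector (ι := ι) (hP f.2).1 (hP f.2).2.1
  choose C v hcharpoly hcyclic using hC
  have hdet (f : P) : (C f).det = 1 := by
    rw [det_eq_sign_charpoly_coeff, hcharpoly, (hP f.2).2.2, ← mul_pow, neg_one_mul, neg_neg,
      one_pow]
  have hconj (f : P) (g : GL ι F) :
      ((g : Matrix ι ι F) * C f * (g⁻¹ : GL ι F)).charpoly = f := by
    rw [coe_units_inv, charpoly_units_conj, hcharpoly]
  let Φ (x : P × GL ι F) :
      {M : SpecialLinearGroup ι F | (M : Matrix ι ι F).charpoly ∈ P} × (ι → F) :=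
    (⟨⟨x.2 * C x.1 * (x.2⁻¹ : GL ι F), by rw [det_units_conj, hdet]⟩,
      (hconj x.1 x.2).symm ▸ x.1.2⟩, (x.2 : Matrix ι ι F) *ᵥ v x.1)
  have hΦ : Function.Injective Φ := by
    rintro ⟨f, g⟩ ⟨f', g'⟩ h
    have hmat : (g : Matrix ι ι F) * C f * (g⁻¹ : GL ι F) = g' * C f' * (g'⁻¹ : GL ι F) :=
      congrArg (fun z ↦ (z.1.1 : Matrix ι ι F)) h
    have hvec : (g : Matrix ι ι F) *ᵥ v f = (g' : Matrix ι ι F) *ᵥ v f' := congrArg Prod.snd h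
    obtain rfl : f = f' := Subtype.ext (by rw [← hconj f g, hmat, hconj])
    exact Prod.ext rfl ((hcyclic f).injective_conj_mulVec (Prod.ext hmat hvec))
  simpa [Nat.card_fun] using Nat.card_le_card_of_injective Φ hΦ

theorem div_le_ncard_div_card [Nontrivial ι] [Finite F] {P : Set F[X]}
    (hP : P ⊆ specialCharpolys ι F) {c : ℝ}
    (hcard : c * (Nat.card F : ℝ) ^ (Fintype.card ι - 2) ≤ P.ncard) :
    c / 2 / Nat.card F ≤
      ({M : SpecialLinearGroup ι F | (M : Matrix ι ι F).charpoly ∈ P}.ncard /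
        Nat.card (SpecialLinearGroup ι F) : ℝ) := by
  have hcount := ncard_mul_card_GL_le hP
  have hq : 2 ≤ Nat.card F := Finite.one_lt_card
  have hsplit :
      Nat.card F ^ Fintype.card ι = Nat.card F ^ (Fintype.card ι - 2) * Nat.card F ^ 2 := by
    rw [← pow_add, Nat.sub_add_cancel Fintype.one_lt_card]
  rw [card_GL_eq, hsplit] at hcount
  set N := Nat.card (SpecialLinearGroup ι F)
  set B := {M : SpecialLinearGroup ι F | (M : Matrix ι ι F).charpoly ∈ P}.ncard
  set q := Nat.card F
  have hq' : (q : ℝ) / 2 ≤ (q - 1 : ℕ) := by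
    rw [Nat.cast_sub (by lia)]
    push_cast
    linarith [show (2 : ℝ) ≤ q from mod_cast hq]
  have hN : 0 < N := Nat.card_pos
  have hprod : c * q ^ (Fintype.card ι - 2) * (q / 2 * N) ≤
      B * (q ^ (Fintype.card ι - 2) * q ^ 2 : ℝ) :=
    calc _ ≤ P.ncard * ((q - 1 : ℕ) * N : ℝ) := by gcongr
      _ ≤ _ := mod_cast hcount
  have hq0 : (0 : ℝ) < q := by positivity
  rw [div_le_div_iff₀ hq0 (by positivity)]
  refine le_of_mul_le_mul_right (a := (q : ℝ) ^ (Fintype.card ι - 2) * q) ?_ (by positivity)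
  linarith

end CharpolyCount

section FiniteFieldPolynomials

open Polynomial

/-- The set of monic irreducible polynomials of degree `d`. -/
def monicIrreducibles (R : Type*) [CommRing R] (d : ℕ) : Set R[X] :=
  {g | g.Monic ∧ Irreducible g ∧ g.natDegree = d}

variable {F : Type*} [Field F] [Finite F]

variable (F) in
theorem finite_setOf_monic_natDegree_eq (d : ℕ) :
    {f : F[X] | f.Monic ∧ f.natDegree = d}.Finite := by
  refine (Set.finite_range (Matrix.charpoly : Matrix (Fin d) (Fin d) F → F[X])).subset ?_
  rintro f ⟨hf, hd⟩
  obtain ⟨C, _, hC, -⟩ := exists_charpoly_eq_isCyclicVector (ι := Fin d) hf (by simpa using hd)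
  exact ⟨C, hC⟩

variable (F) in
theorem finite_monicIrreducibles (d : ℕ) : (monicIrreducibles F d).Finite :=
  (finite_setOf_monic_natDegree_eq F d).subset fun _ hg ↦ ⟨hg.1, hg.2.2⟩

section Extension

variable {E : Type*} [Field E] [Fintype E] [Algebra F E]

theorem card_natDegree_minpoly_eq_le_pow (d : ℕ) :
    Finset.card {x : E | (minpoly F x).natDegree = d} ≤ Nat.card F ^ d := by
  classical
  obtain rfl | hd := eq_or_ne d 0
  · simp [Finset.filter_false_of_mem fun (x : E) _ ↦
      (minpoly.natDegree_pos (Algebra.IsIntegral.isIntegral (R := F) x)).ne']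
  have hdeg := FiniteField.X_pow_card_pow_sub_X_natDegree_eq E hd (Finite.one_lt_card (α := F))
  have hroots : ({x : E | (minpoly F x).natDegree = d} : Finset E) ⊆
      (X ^ Nat.card F ^ d - X : E[X]).roots.toFinset := fun x hx ↦ by
    have hirr := minpoly.irreducible (Algebra.IsIntegral.isIntegral (R := F) x)
    have hdvd := hirr.natDegree_dvd_iff_dvd_X_pow_card_pow_sub_X.mp
      (Finset.mem_filter.mp hx).2.dvd
    rw [Multiset.mem_toFinset, mem_roots (FiniteField.X_pow_card_pow_sub_X_ne_zero E hd
      Finite.one_lt_card)]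
    simpa using (minpoly.dvd_iff.mp hdvd)
  calc _ ≤ _ := Finset.card_le_card hroots
    _ ≤ _ := Multiset.toFinset_card_le _
    _ ≤ _ := card_roots' _
    _ = _ := hdeg

theorem card_natDegree_minpoly_eq_le_mul (d : ℕ) :
    Finset.card {x : E | (minpoly F x).natDegree = d} ≤ d * (monicIrreducibles F d).ncard := by
  classical
  have hint (x : E) : IsIntegral F x := Algebra.IsIntegral.isIntegral x
  rw [Set.ncard_eq_toFinset_card _ (finite_monicIrreducibles F d)]
  refine Finset.card_le_mul_card_image_of_maps_to (f := minpoly F) (fun x hx ↦ ?_) d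
    fun g hg ↦ ?_
  · rw [Set.Finite.mem_toFinset]
    exact ⟨minpoly.monic (hint x), minpoly.irreducible (hint x), (Finset.mem_filter.mp hx).2⟩
  · obtain ⟨hmonic, -, rfl⟩ := (Set.Finite.mem_toFinset _).mp hg
    have hroots : {x ∈ ({x : E | (minpoly F x).natDegree = g.natDegree} : Finset E) |
        minpoly F x = g} ⊆ (g.aroots E).toFinset := fun x hx ↦ by
      obtain rfl := (Finset.mem_filter.mp hx).2
      rw [Multiset.mem_toFinset, mem_aroots]
      exact ⟨hmonic.ne_zero, minpoly.aeval F x⟩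
    calc _ ≤ _ := Finset.card_le_card hroots
      _ ≤ _ := Multiset.toFinset_card_le _
      _ ≤ _ := g.card_roots_map_le_natDegree

end Extension

theorem two_mul_sum_range_pow_le {q : ℕ} (hq : 3 ≤ q) (m : ℕ) :
    2 * ∑ d ∈ Finset.range m, q ^ d ≤ q ^ m := by
  calc 2 * ∑ d ∈ Finset.range m, q ^ d ≤ (q - 1) * ∑ d ∈ Finset.range m, q ^ d := by
        gcongr; lia
    _ = q ^ m - 1 := by
        rw [Nat.geomSum_eq (by lia), Nat.mul_div_cancel' (Nat.sub_one_dvd_pow_sub_one ..)]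
    _ ≤ q ^ m := Nat.sub_le _ _

theorem card_pow_le_ncard_monicIrreducibles (hq : 3 ≤ Nat.card F) {m : ℕ} (hm : m ≠ 0) :
    Nat.card F ^ m ≤ 2 * m * (monicIrreducibles F m).ncard := by
  classical
  obtain ⟨p, _⟩ := CharP.exists F
  have : Fact p.Prime := ⟨CharP.char_is_prime F p⟩
  have : NeZero m := ⟨hm⟩
  set E := FiniteField.Extension F p m
  have : Fintype E := Fintype.ofFinite E
  have hdeg (x : E) : (minpoly F x).natDegree ∈ Finset.range (m + 1) := by
    rw [Finset.mem_range, Nat.lt_succ_iff]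
    exact (minpoly.natDegree_le x).trans_eq (FiniteField.finrank_extension F p m)
  have hcard : Nat.card F ^ m =
      ∑ d ∈ Finset.range (m + 1), Finset.card {x : E | (minpoly F x).natDegree = d} := by
    rw [← FiniteField.natCard_extension F p m, Nat.card_eq_fintype_card, ← Finset.card_univ]
    exact Finset.card_eq_sum_card_fiberwise fun x _ ↦ hdeg x
  rw [Finset.sum_range_succ] at hcard
  have hlt : ∑ d ∈ Finset.range m, Finset.card {x : E | (minpoly F x).natDegree = d} ≤
      ∑ d ∈ Finset.range m, Nat.card F ^ d :=
    Finset.sum_le_sum fun d _ ↦ card_natDegree_minpoly_eq_le_pow d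
  have hgen := card_natDegree_minpoly_eq_le_mul (F := F) (E := E) m
  linarith [two_mul_sum_range_pow_le hq m]

theorem exists_mem_monicIrreducibles_two_coeff_zero_eq {s : F} (hs : s ≠ 0) :
    ∃ Q ∈ monicIrreducibles F 2, Q.coeff 0 = s := by
  have hlt : Nat.card Fˣ < Nat.card F := by
    rw [Nat.card_units]
    exact Nat.sub_lt Nat.card_pos one_pos
  obtain ⟨t, ht⟩ : ∃ t : F, t ∉ Set.range fun x : Fˣ ↦ (x + s / x : F) := by
    by_contra! h
    exact hlt.not_ge (Nat.card_le_card_of_surjective _ h)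
  set Q : F[X] := X ^ 2 + C (-t) * X + C s
  have hQ : Q = C 1 * X ^ 2 + C (-t) * X + C s := by simp [Q]
  have hdeg : Q.natDegree = 2 := hQ ▸ natDegree_quadratic one_ne_zero
  have hmonic : Q.Monic := by rw [Monic, hQ, leadingCoeff_quadratic one_ne_zero]
  refine ⟨Q, ⟨hmonic, ?_, hdeg⟩, by simp [Q]⟩
  rw [hmonic.irreducible_iff_roots_eq_zero_of_degree_le_three hdeg.ge (by lia),
    Multiset.eq_zero_iff_forall_notMem]
  intro x hx
  have hroot : x ^ 2 - t * x + s = 0 := by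
    simpa [Q, sub_eq_add_neg] using (mem_roots'.mp hx).2
  have hx0 : x ≠ 0 := by
    rintro rfl
    exact hs (by simpa using hroot)
  refine ht ⟨Units.mk0 x hx0, ?_⟩
  simp only [Units.val_mk0]
  field_simp
  linear_combination hroot

end FiniteFieldPolynomials

section CycleFactorization

open Polynomial

/-- `f` is the product of distinct linear factors and of a monic irreducible factor of degree `d`.
Over a finite field this says that Frobenius acts on the roots of `f` as a `d`-cycle. -/
def HasCycleFactorization {R : Type*} [CommRing R] (d : ℕ) (f : R[X]) : Prop :=
  ∃ A : Finset R, ∃ Q ∈ monicIrreducibles R d, f = (∏ a ∈ A, (X - C a)) * Q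

variable {ι F : Type*} [Fintype ι] [Field F]

theorem roots_eq_zero_of_mem_monicIrreducibles {d : ℕ} (hd : 2 ≤ d) {Q : F[X]}
    (hQ : Q ∈ monicIrreducibles F d) : Q.roots = 0 :=
  roots_eq_zero_of_irreducible_of_natDegree_ne_one hQ.2.1 (by rw [hQ.2.2]; lia)

theorem roots_prod_X_sub_C_mul {d : ℕ} (hd : 2 ≤ d) {Q : F[X]} (hQ : Q ∈ monicIrreducibles F d)
    (A : Finset F) : ((∏ a ∈ A, (X - C a)) * Q).roots = A.val := by
  rw [roots_mul ((monic_prod_X_sub_C (fun a ↦ a) A).mul hQ.1).ne_zero, roots_prod_X_sub_C,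
    roots_eq_zero_of_mem_monicIrreducibles hd hQ, add_zero]

theorem prod_X_sub_C_mul_mem_specialCharpolys {d : ℕ} {A : Finset F} {Q : F[X]}
    (hQ : Q ∈ monicIrreducibles F d) (hcard : A.card + d = Fintype.card ι)
    (hcoeff : (∏ a ∈ A, a) * Q.coeff 0 = (-1) ^ d) :
    (∏ a ∈ A, (X - C a)) * Q ∈ specialCharpolys ι F := by
  have hA : (∏ a ∈ A, (X - C a)).Monic := monic_prod_X_sub_C (fun a ↦ a) A
  refine ⟨hA.mul hQ.1, ?_, ?_⟩
  · rw [hA.natDegree_mul hQ.1, hQ.2.2, natDegree_finsetProd_X_sub_C_eq_card A fun a ↦ a, hcard]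
  · simp only [mul_coeff_zero, coeff_zero_prod, coeff_sub, coeff_X_zero, coeff_C_zero, zero_sub]
    rw [Finset.prod_neg, mul_assoc, hcoeff, ← pow_add, hcard]

variable [Finite F]

variable (ι F) in
theorem finite_specialCharpolys : (specialCharpolys ι F).Finite :=
  (finite_setOf_monic_natDegree_eq F (Fintype.card ι)).subset fun _ hf ↦ ⟨hf.1, hf.2.1⟩

theorem card_pow_le_ncard_hasCycleFactorization (hq : 3 ≤ Nat.card F) (hι : 3 ≤ Fintype.card ι) :
    Nat.card F ^ (Fintype.card ι - 1) ≤ 2 * (Fintype.card ι - 1) *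
      {f ∈ specialCharpolys ι F | HasCycleFactorization (Fintype.card ι - 1) f}.ncard := by
  set d := Fintype.card ι - 1
  let A (g : F[X]) : Finset F := {(-1) ^ d / g.coeff 0}
  refine (card_pow_le_ncard_monicIrreducibles hq (by lia)).trans (Nat.mul_le_mul_left _ ?_)
  refine Set.ncard_le_ncard_of_injOn (fun g ↦ (∏ a ∈ A g, (X - C a)) * g) (fun g hg ↦ ?_)
    (fun g hg h hh hgh ↦ ?_) ((finite_specialCharpolys ι F).subset (Set.sep_subset ..))
  · have hg0 : g.coeff 0 ≠ 0 := fun h0 ↦ by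
      have hroot : (0 : F) ∈ g.roots :=
        mem_roots'.mpr ⟨hg.1.ne_zero, zero_isRoot_of_coeff_zero_eq_zero h0⟩
      simp [roots_eq_zero_of_mem_monicIrreducibles (by lia) hg] at hroot
    refine ⟨prod_X_sub_C_mul_mem_specialCharpolys hg ?_ ?_, A g, g, hg, rfl⟩
    · rw [Finset.card_singleton]
      lia
    · rw [Finset.prod_singleton, div_mul_cancel₀ _ hg0]
  · have hA : A g = A h := Finset.val_injective <| by
      simpa only [roots_prod_X_sub_C_mul (show 2 ≤ d by lia) hg,
        roots_prod_X_sub_C_mul (show 2 ≤ d by lia) hh] using congrArg roots hgh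
    simp only [hA] at hgh
    exact mul_left_cancel₀ (monic_prod_X_sub_C (fun a ↦ a) _).ne_zero hgh

theorem choose_le_ncard_hasCycleFactorization_two (hι : 2 ≤ Fintype.card ι) (B : Finset F) :
    (Nat.card F - (B.card + 1)).choose (Fintype.card ι - 2) ≤
      {f ∈ specialCharpolys ι F | HasCycleFactorization 2 f ∧ ∀ b ∈ B, ¬ f.IsRoot b}.ncard := by
  classical
  have := Fintype.ofFinite F
  set U : Finset F := (insert 0 B)ᶜ
  have hU : Nat.card F - (B.card + 1) ≤ U.card := by
    rw [Finset.card_compl, Nat.card_eq_fintype_card]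
    exact Nat.sub_le_sub_left (Finset.card_insert_le 0 B) _
  have hprod {A : Finset F} (hA : A ⊆ U) : ∏ a ∈ A, a ≠ 0 :=
    Finset.prod_ne_zero_iff.mpr fun a ha h0 ↦ by simpa [U, h0] using hA ha
  have hQ (A : Finset F) : ∃ Q : F[X], A ⊆ U →
      Q ∈ monicIrreducibles F 2 ∧ (∏ a ∈ A, a) * Q.coeff 0 = (-1) ^ 2 := by
    by_cases hA : A ⊆ U
    · obtain ⟨Q, hQ, hcoeff⟩ := exists_mem_monicIrreducibles_two_coeff_zero_eq
        (inv_ne_zero (hprod hA))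
      exact ⟨Q, fun _ ↦ ⟨hQ, by rw [hcoeff, mul_inv_cancel₀ (hprod hA), neg_one_sq]⟩⟩
    · exact ⟨0, fun h ↦ absurd h hA⟩
  choose Q hQ using hQ
  refine (Nat.choose_le_choose _ hU).trans ?_
  rw [← Finset.card_powersetCard, ← Set.ncard_coe_finset]
  refine Set.ncard_le_ncard_of_injOn (fun A ↦ (∏ a ∈ A, (X - C a)) * Q A) (fun A hA ↦ ?_)
    (fun A hA A' hA' h ↦ ?_) ((finite_specialCharpolys ι F).subset (Set.sep_subset ..))
  · obtain ⟨hAU, hcard⟩ := Finset.mem_powersetCard.mp hA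
    obtain ⟨hmem, hcoeff⟩ := hQ A hAU
    refine ⟨prod_X_sub_C_mul_mem_specialCharpolys hmem (by lia) hcoeff, ⟨A, Q A, hmem, rfl⟩,
      fun b hb hroot ↦ ?_⟩
    have hbA : b ∈ A := by
      rw [← Finset.mem_val, ← roots_prod_X_sub_C_mul le_rfl hmem]
      exact (mem_roots ((monic_prod_X_sub_C (fun a ↦ a) A).mul hmem.1).ne_zero).mpr hroot
    exact Finset.mem_compl.mp (hAU hbA) (Finset.mem_insert_of_mem hb)
  · refine Finset.val_injective ?_
    simpa only [roots_prod_X_sub_C_mul le_rfl (hQ A (Finset.mem_powersetCard.mp hA).1).1,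
      roots_prod_X_sub_C_mul le_rfl (hQ A' (Finset.mem_powersetCard.mp hA').1).1]
      using congrArg roots h

end CycleFactorization

section PrimesModuli

open Polynomial Matrix Filter

variable {ι : Type*} [Fintype ι] [DecidableEq ι]

theorem not_summable_one_div_primes_ge (N : ℕ) :
    ¬ Summable fun p : {p : Nat.Primes // N ≤ p} ↦ (1 / (p : ℕ) : ℝ) := by
  have hfin : {p : Nat.Primes | (p : ℕ) < N}.Finite :=
    (Set.finite_Iio N).preimage Nat.Primes.coe_nat_injective.injOn
  have hcompl : {p : Nat.Primes | (p : ℕ) < N}ᶜ = {p : Nat.Primes | N ≤ (p : ℕ)} := by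
    ext p
    simp
  intro h
  refine Nat.Primes.not_summable_one_div (hfin.summable_compl_iff.mp ?_)
  rw [hcompl]
  exact h

/-- Strong approximation for `H` at the primes from `N` on: its image in `∏ p ∈ P, SL ι 𝔽_p` is
everything, for all finite sets `P` of such primes. -/
def HasStrongApproximation (N : ℕ) (H : Subgroup (SpecialLinearGroup ι ℤ)) : Prop :=
  ∀ P : Finset Nat.Primes, (∀ p ∈ P, N ≤ p) → ∀ x : ∀ p : Nat.Primes, SpecialLinearGroup ι (ZMod p),
    ∃ g ∈ H, ∀ p ∈ P, SpecialLinearGroup.map (Int.castRingHom (ZMod p)) g = x p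

theorem HasStrongApproximation.mono {N N' : ℕ} (hN : N ≤ N')
    {H : Subgroup (SpecialLinearGroup ι ℤ)} (hH : HasStrongApproximation N H) :
    HasStrongApproximation N' H :=
  fun P hP ↦ hH P fun p hp ↦ hN.trans (hP p hp)

theorem HasStrongApproximation.top [Nontrivial ι] :
    HasStrongApproximation 0 (⊤ : Subgroup (SpecialLinearGroup ι ℤ)) := by
  intro P _ x
  have (p : P) : Fact (p : ℕ).Prime := ⟨p.1.2⟩
  have hcoprime : Pairwise (Function.onFun Nat.Coprime fun p : P ↦ (p : ℕ)) := fun p q hpq ↦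
    (Nat.coprime_primes p.1.2 q.1.2).mpr fun h ↦
      hpq (Subtype.ext (Nat.Primes.coe_nat_injective h))
  obtain ⟨g, hg⟩ := surjective_pi_map (ι := ι) (surjective_pi_intCast_zmod hcoprime)
    fun p : P ↦ x p
  exact ⟨g, Subgroup.mem_top g, fun p hp ↦ congrFun hg ⟨p, hp⟩⟩

theorem HasStrongApproximation.ne_bot [Nontrivial ι] {N : ℕ}
    {H : Subgroup (SpecialLinearGroup ι ℤ)} (hH : HasStrongApproximation N H) : H ≠ ⊥ := by
  rintro rfl
  obtain ⟨i, j, hij⟩ := exists_pair_ne ι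
  obtain ⟨p, hNp, hp⟩ := Nat.exists_infinite_primes N
  have := Fact.mk hp
  obtain ⟨g, hg, hgx⟩ := hH {⟨p, hp⟩} (fun q hq ↦ Finset.mem_singleton.mp hq ▸ hNp)
    fun q ↦ SpecialLinearGroup.transvection hij 1
  rw [Subgroup.mem_bot] at hg
  subst hg
  have h := congrArg (fun A : SpecialLinearGroup ι (ZMod p) ↦ (A : Matrix ι ι (ZMod p)) i j)
    (hgx ⟨p, hp⟩ (Finset.mem_singleton_self _))
  simp [SpecialLinearGroup.transvection_coe, hij] at h

theorem isPerfect_specialLinearGroup_zmod [Nontrivial ι] {p : ℕ} [Fact p.Prime] (hp : 5 ≤ p) :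
    Group.IsPerfect (SpecialLinearGroup ι (ZMod p)) := by
  have hne (k : ℕ) (hk0 : 0 < k) (hk : k < p) : (k : ZMod p) ≠ 0 := fun h ↦
    hk.not_ge (Nat.le_of_dvd hk0 ((ZMod.natCast_eq_zero_iff k p).mp h))
  exact isPerfect_specialLinearGroup (a := 2) (mod_cast hne 2 (by lia) (by lia))
    (by convert hne 3 (by lia) (by lia) using 1; norm_num)

variable {ω : Type*} [Fintype ω] [Nonempty ω]

theorem eventually_exists_charpoly_map_mem [Nontrivial ι] {s : ω → SpecialLinearGroup ι ℤ} {N : ℕ}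
    (hs : HasStrongApproximation N (Subgroup.closure (Set.range s))) {c : ℝ} (hc : 0 < c)
    {P : ∀ p : ℕ, Set (ZMod p)[X]}
    (hP : ∀ p : ℕ, [Fact p.Prime] → N ≤ p →
      c * (p : ℝ) ^ (Fintype.card ι - 2) ≤ (specialCharpolys ι (ZMod p) ∩ P p).ncard) :
    ∀ᶠ g : SpecialLinearGroup ι ℤ in almostEveryWord s, ∃ p : ℕ, p.Prime ∧
      (g : Matrix ι ι ℤ).charpoly.map (Int.castRingHom (ZMod p)) ∈ P p := by
  wlog hN : 5 ≤ N generalizing N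
  · exact this (hs.mono (le_max_left N 5)) (fun p _ hp ↦ hP p (le_of_max_le_left hp))
      (le_max_right N 5)
  have hprime (p : {p : Nat.Primes // N ≤ p}) : Fact (p : ℕ).Prime := ⟨p.1.2⟩
  have hperfect (p : {p : Nat.Primes // N ≤ p}) :
      Group.IsPerfect (SpecialLinearGroup ι (ZMod (p : ℕ))) :=
    isPerfect_specialLinearGroup_zmod (hN.trans p.2)
  have happrox (T : Finset {p : Nat.Primes // N ≤ p})
      (x : ∀ p : {p : Nat.Primes // N ≤ p}, SpecialLinearGroup ι (ZMod (p : ℕ))) :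
      ∃ g ∈ Subgroup.closure (Set.range s), ∀ p ∈ T,
        SpecialLinearGroup.map (Int.castRingHom (ZMod (p : ℕ))) g = x p := by
    classical
    obtain ⟨g, hg, hgx⟩ := hs (T.map (Function.Embedding.subtype _))
      (fun p hp ↦ by obtain ⟨q, -, rfl⟩ := Finset.mem_map.mp hp; exact q.2)
      (fun p ↦ if hp : N ≤ p then x ⟨p, hp⟩ else 1)
    exact ⟨g, hg, fun p hp ↦ (hgx p (Finset.mem_map_of_mem _ hp)).trans (dif_pos p.2)⟩
  let B (p : {p : Nat.Primes // N ≤ p}) : Set (SpecialLinearGroup ι (ZMod (p : ℕ))) :=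
    {M | (M : Matrix ι ι (ZMod (p : ℕ))).charpoly ∈ specialCharpolys ι (ZMod (p : ℕ)) ∩ P p}
  have hsum : ¬ Summable fun p ↦
      ((B p).ncard / Nat.card (SpecialLinearGroup ι (ZMod (p : ℕ))) : ℝ) := fun h ↦ by
    refine not_summable_one_div_primes_ge N ((summable_mul_left_iff (half_pos hc).ne').mp
      (h.of_nonneg_of_le (fun p ↦ by positivity) fun p ↦ ?_))
    have := div_le_ncard_div_card (ι := ι) (F := ZMod (p : ℕ)) (c := c) Set.inter_subset_left
      (by simpa using hP p p.2)
    simpa [B, div_eq_mul_inv] using this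
  filter_upwards [eventually_exists_mem_of_not_summable happrox hsum] with g ⟨p, hp⟩
  refine ⟨p, p.1.2, ?_⟩
  rw [← charpoly_map]
  exact hp.2

theorem eventually_exists_hasCycleFactorization (hι : 3 ≤ Fintype.card ι)
    {s : ω → SpecialLinearGroup ι ℤ} {N : ℕ}
    (hs : HasStrongApproximation N (Subgroup.closure (Set.range s))) :
    ∀ᶠ g : SpecialLinearGroup ι ℤ in almostEveryWord s, ∃ p : ℕ, p.Prime ∧
      HasCycleFactorization (Fintype.card ι - 1)
        ((g : Matrix ι ι ℤ).charpoly.map (Int.castRingHom (ZMod p))) := by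
  have : Nontrivial ι := Fintype.one_lt_card_iff_nontrivial.mp (by lia)
  have hd : (0 : ℝ) < 2 * (Fintype.card ι - 1 : ℕ) := by
    exact_mod_cast (by lia : 0 < 2 * (Fintype.card ι - 1))
  refine eventually_exists_charpoly_map_mem (P := fun _ ↦ {f | HasCycleFactorization _ f})
    (hs.mono (le_max_left N 3)) (one_div_pos.mpr hd) fun p _ hp ↦ ?_
  rw [one_div_mul_eq_div, div_le_iff₀' hd]
  have hcount := card_pow_le_ncard_hasCycleFactorization (F := ZMod p)
    (by simpa using le_of_max_le_right hp) hι
  rw [Nat.card_zmod] at hcount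
  exact_mod_cast (Nat.pow_le_pow_right (Fact.out : p.Prime).pos (by lia)).trans hcount

theorem eventually_exists_hasCycleFactorization_two [Nontrivial ι]
    {s : ω → SpecialLinearGroup ι ℤ} {N : ℕ}
    (hs : HasStrongApproximation N (Subgroup.closure (Set.range s))) (B : Finset ℤ) :
    ∀ᶠ g : SpecialLinearGroup ι ℤ in almostEveryWord s, ∃ p : ℕ, p.Prime ∧
      HasCycleFactorization 2 ((g : Matrix ι ι ℤ).charpoly.map (Int.castRingHom (ZMod p))) ∧
      ∀ b ∈ B, ¬ ((g : Matrix ι ι ℤ).charpoly.map (Int.castRingHom (ZMod p))).IsRoot b := by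
  have hι : 2 ≤ Fintype.card ι := Fintype.one_lt_card
  set d := Fintype.card ι - 2
  refine eventually_exists_charpoly_map_mem (c := 1 / (2 ^ d * d.factorial))
    (P := fun p ↦ {f | HasCycleFactorization 2 f ∧ ∀ b ∈ B, ¬ f.IsRoot (b : ZMod p)})
    (hs.mono (le_max_left N (2 * (B.card + Fintype.card ι)))) (by positivity) fun p _ hp ↦ ?_
  replace hp := le_of_max_le_right hp
  have hB : (B.image ((↑) : ℤ → ZMod p)).card ≤ B.card := Finset.card_image_le
  have hcount := choose_le_ncard_hasCycleFactorization_two hι (B.image ((↑) : ℤ → ZMod p))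
  rw [Nat.card_zmod] at hcount
  simp only [Finset.forall_mem_image] at hcount
  set m := p - ((B.image ((↑) : ℤ → ZMod p)).card + 1)
  have hm : (p : ℝ) ≤ 2 * (m + 1 - d : ℕ) := by
    exact_mod_cast (by lia : p ≤ 2 * (m + 1 - d))
  calc
    1 / (2 ^ d * d.factorial) * (p : ℝ) ^ d = (p / 2 : ℝ) ^ d / d.factorial := by
      rw [div_pow]
      field_simp
    _ ≤ ((m + 1 - d : ℕ) : ℝ) ^ d / d.factorial := by
      gcongr
      linarith
    _ ≤ m.choose d := Nat.pow_le_choose d m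
    _ ≤ _ := mod_cast hcount

end PrimesModuli

section Hensel

open Polynomial

theorem natDegree_eq_of_eq_prod_X_sub_C_mul {R : Type*} [CommRing R] [Nontrivial R] {f : R[X]}
    {d : ℕ} {A : Finset R} {Q : R[X]} (hQ : Q ∈ monicIrreducibles R d)
    (h : f = (∏ a ∈ A, (X - C a)) * Q) : f.natDegree = A.card + d := by
  rw [h, (monic_prod_X_sub_C (fun a ↦ a) A).natDegree_mul hQ.1, hQ.2.2,
    natDegree_finsetProd_X_sub_C_eq_card A fun a ↦ a]

variable {R k : Type*} [CommRing R] [Field k] {φ : R →+* k}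

theorem exists_isRoot_lift [HenselianRing R (RingHom.ker φ)] (hφ : Function.Surjective φ)
    {f : R[X]} (hf : f.Monic) {a : k} (hroot : (f.map φ).IsRoot a)
    (hsimple : (f.map φ).derivative.eval a ≠ 0) : ∃ z, f.IsRoot z ∧ φ z = a := by
  obtain ⟨b, rfl⟩ := hφ a
  have hunit : IsUnit (Ideal.Quotient.mk (RingHom.ker φ) (f.derivative.eval b)) := by
    rw [← isUnit_map_iff (RingHom.quotientKerEquivOfSurjective hφ)]
    simpa [derivative_map, eval_map_apply] using hsimple
  obtain ⟨z, hz, hzb⟩ := HenselianRing.is_henselian f hf b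
    (RingHom.mem_ker.mpr (by simpa [eval_map_apply] using hroot)) hunit
  exact ⟨z, hz, sub_eq_zero.mp (by rwa [← map_sub])⟩

theorem isRoot_and_derivative_ne_zero_of_eq_prod_mul {d : ℕ} (hd : 2 ≤ d) {f : k[X]}
    {A : Finset k} {Q : k[X]} (hQ : Q ∈ monicIrreducibles k d)
    (h : f = (∏ a ∈ A, (X - C a)) * Q) {a : k} (ha : a ∈ A) :
    f.IsRoot a ∧ f.derivative.eval a ≠ 0 := by
  have hf0 : f ≠ 0 := h ▸ ((monic_prod_X_sub_C (fun a ↦ a) A).mul hQ.1).ne_zero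
  have hroots : f.roots = A.val := h ▸ roots_prod_X_sub_C_mul hd hQ A
  have hmult : f.rootMultiplicity a = 1 := by
    classical
    rw [← count_roots, hroots, Multiset.count_eq_one_of_mem A.nodup ha]
  have hroot : f.IsRoot a := (mem_roots hf0).mp (hroots ▸ ha)
  refine ⟨hroot, fun hder ↦ ?_⟩
  exact absurd ((one_lt_rootMultiplicity_iff_isRoot hf0).mpr ⟨hroot, hder⟩) (by lia)

theorem HasCycleFactorization.of_map [IsDomain R] [HenselianRing R (RingHom.ker φ)]
    (hφ : Function.Surjective φ) {f : R[X]} (hf : f.Monic) {d : ℕ} (hd : 2 ≤ d)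
    (h : HasCycleFactorization d (f.map φ)) : HasCycleFactorization d f := by
  classical
  obtain ⟨A, Q, hQ, hfQ⟩ := h
  have hlift (a : k) : ∃ z, a ∈ A → f.IsRoot z ∧ φ z = a := by
    by_cases ha : a ∈ A
    · obtain ⟨hroot, hsimple⟩ := isRoot_and_derivative_ne_zero_of_eq_prod_mul hd hQ hfQ ha
      obtain ⟨z, hz⟩ := exists_isRoot_lift hφ hf hroot hsimple
      exact ⟨z, fun _ ↦ hz⟩
    · exact ⟨0, fun h ↦ absurd h ha⟩
  choose z hz using hlift
  have hinj : Set.InjOn z A := fun a ha b hb hab ↦ by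
    rw [← (hz a ha).2, ← (hz b hb).2, hab]
  have hroots : (A.image z).val ≤ f.roots := by
    refine (Multiset.le_iff_subset (A.image z).nodup).mpr fun x hx ↦ ?_
    obtain ⟨a, ha, rfl⟩ := Finset.mem_image.mp hx
    exact (mem_roots hf.ne_zero).mpr (hz a ha).1
  obtain ⟨H, hH⟩ := (Multiset.prod_X_sub_C_dvd_iff_le_roots hf.ne_zero _).mpr hroots
  have hmapProd : (∏ a ∈ A.image z, (X - C a)).map φ = ∏ a ∈ A, (X - C a) := by
    rw [Finset.prod_image hinj, Polynomial.map_prod]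
    exact Finset.prod_congr rfl fun a ha ↦ by simp [(hz a ha).2]
  have hprod : (∏ a ∈ A.image z, (X - C a)).Monic := monic_prod_X_sub_C (fun a ↦ a) _
  have hHmonic : H.Monic := hprod.of_mul_monic_left (hH ▸ hf)
  have hHQ : H.map φ = Q := by
    refine mul_left_cancel₀ (monic_prod_X_sub_C (fun a ↦ a) A).ne_zero ?_
    rw [← hfQ, ← hmapProd, ← Polynomial.map_mul]
    exact congrArg (Polynomial.map φ) hH.symm
  subst hHQ
  exact ⟨A.image z, H, ⟨hHmonic, hHmonic.irreducible_of_irreducible_map φ H hQ.2.1,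
    (hHmonic.natDegree_map φ).symm.trans hQ.2.2⟩, hH⟩

theorem HasCycleFactorization.map_algebraMap {R K : Type*} [CommRing R] [IsDomain R]
    [IsIntegrallyClosed R] [Field K] [Algebra R K] [IsFractionRing R K] {d : ℕ} {f : R[X]}
    (h : HasCycleFactorization d f) : HasCycleFactorization d (f.map (algebraMap R K)) := by
  obtain ⟨A, Q, ⟨hmonic, hirr, hdeg⟩, rfl⟩ := h
  refine ⟨A.map ⟨algebraMap R K, IsFractionRing.injective R K⟩, Q.map (algebraMap R K),
    ⟨hmonic.map _, hmonic.irreducible_iff_irreducible_map_fraction_map.mp hirr,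
      (hmonic.natDegree_map _).trans hdeg⟩, ?_⟩
  simp [Polynomial.map_prod]

theorem hasCycleFactorization_map_padic {p : ℕ} [Fact p.Prime] {f : ℤ[X]} (hf : f.Monic) {d : ℕ}
    (hd : 2 ≤ d) (h : HasCycleFactorization d (f.map (Int.castRingHom (ZMod p)))) :
    HasCycleFactorization d ((f.map (algebraMap ℤ ℚ)).map (algebraMap ℚ ℚ_[p])) := by
  have : HenselianRing ℤ_[p] (RingHom.ker (PadicInt.toZMod (p := p))) :=
    PadicInt.ker_toZMod (p := p) ▸ inferInstance
  have hmap : (f.map (Int.castRingHom ℤ_[p])).map PadicInt.toZMod =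
      f.map (Int.castRingHom (ZMod p)) := by
    rw [map_map, RingHom.ext_int (PadicInt.toZMod.comp _) (Int.castRingHom (ZMod p))]
  have hpadic := HasCycleFactorization.map_algebraMap (K := ℚ_[p]) <|
    HasCycleFactorization.of_map (ZMod.ringHom_surjective PadicInt.toZMod)
      (hf.map (Int.castRingHom ℤ_[p])) hd (hmap ▸ h)
  rwa [map_map, RingHom.ext_int ((algebraMap ℤ_[p] ℚ_[p]).comp _)
    ((algebraMap ℚ ℚ_[p]).comp (algebraMap ℤ ℚ)), ← map_map] at hpadic

end Hensel

section Irreducibility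

open Polynomial

theorem natDegree_eq_zero_of_dvd_of_forall_not_isRoot {R : Type*} [CommRing R] {f v : R[X]}
    (hv : v.Monic) (hle : v.natDegree ≤ 1) (hvf : v ∣ f) (hroots : ∀ a, ¬ f.IsRoot a) :
    v.natDegree = 0 := by
  by_contra hne
  have hvX : v = X + C (v.coeff 0) := hv.eq_X_add_C (by lia)
  refine hroots (-v.coeff 0) (IsRoot.dvd ?_ hvf)
  rw [hvX]
  simp

theorem irreducible_of_hasCycleFactorization_map {R k : Type*} [CommRing R] [IsDomain R] [Field k]
    (φ : R →+* k) {f : R[X]} (hf : f.Monic) (hroots : ∀ a, ¬ f.IsRoot a) {d : ℕ} (hd : 0 < d)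
    (hdeg : f.natDegree ≤ d + 1) (h : HasCycleFactorization d (f.map φ)) : Irreducible f := by
  obtain ⟨A, Q, ⟨hQmonic, hQirr, hQdeg⟩, hfQ⟩ := h
  have hfdeg : d ≤ f.natDegree := by
    rw [← hf.natDegree_map φ, natDegree_eq_of_eq_prod_X_sub_C_mul ⟨hQmonic, hQirr, hQdeg⟩ hfQ]
    lia
  have key {u v : R[X]} (hu : u.Monic) (hv : v.Monic) (huv : u * v = f) (hQu : Q ∣ u.map φ) :
      v.natDegree = 0 := by
    have hle : d ≤ u.natDegree := by
      simpa only [hQdeg, hu.natDegree_map] using natDegree_le_of_dvd hQu (hu.map φ).ne_zero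
    have hadd : u.natDegree + v.natDegree = f.natDegree := huv ▸ (hu.natDegree_mul hv).symm
    exact natDegree_eq_zero_of_dvd_of_forall_not_isRoot hv (by lia) ⟨u, by rw [← huv, mul_comm]⟩
      hroots
  refine hf.irreducible_iff_natDegree.mpr ⟨?_, fun u v hu hv huv ↦ ?_⟩
  · rintro rfl
    rw [natDegree_one] at hfdeg
    lia
  · have hdvd : Q ∣ u.map φ * v.map φ := by
      rw [← Polynomial.map_mul, huv, hfQ]
      exact dvd_mul_left ..
    rcases hQirr.prime.dvd_or_dvd hdvd with hQu | hQv
    · exact Or.inr (key hu hv huv hQu)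
    · exact Or.inl (key hv hu (mul_comm u v ▸ huv) hQv)

theorem not_isRoot_of_isUnit_coeff_zero {f : ℤ[X]} (hf : IsUnit (f.coeff 0)) (h1 : ¬ f.IsRoot 1)
    (h1' : ¬ f.IsRoot (-1)) (a : ℤ) : ¬ f.IsRoot a := fun ha ↦ by
  rcases Int.isUnit_iff.mp (isUnit_of_dvd_unit ha.dvd_coeff_zero hf) with rfl | rfl
  · exact h1 ha
  · exact h1' ha

end Irreducibility

section GaloisGroups

open Polynomial MulAction

variable {F K E : Type*} [Field F] [Field K] [Field E] [Algebra F K] [Algebra F E] [Algebra K E]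
  [IsScalarTower F K E] {q : F[X]}

theorem eq_algebraMap_or_aeval_eq_zero {A : Finset K} {Q : K[X]}
    (h : q.map (algebraMap F K) = (∏ a ∈ A, (X - C a)) * Q) {x : E} (hx : aeval x q = 0) :
    (∃ a ∈ A, x = algebraMap K E a) ∨ aeval x Q = 0 := by
  rw [← aeval_map_algebraMap K, h, map_mul, mul_eq_zero, map_prod, Finset.prod_eq_zero_iff] at hx
  simpa only [map_sub, aeval_X, aeval_C, sub_eq_zero] using hx

theorem mem_rootSet_of_eq_prod_X_sub_C_mul (hq : q ≠ 0) {A : Finset K} {Q : K[X]}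
    (h : q.map (algebraMap F K) = (∏ a ∈ A, (X - C a)) * Q) {x : E} (hx : aeval x Q = 0) :
    x ∈ q.rootSet E := by
  rw [mem_rootSet, ← aeval_map_algebraMap K, h, map_mul, hx, mul_zero]
  exact ⟨hq, rfl⟩

theorem algebraMap_mem_rootSet_of_eq_prod_X_sub_C_mul (hq : q ≠ 0) {A : Finset K} {Q : K[X]}
    (h : q.map (algebraMap F K) = (∏ a ∈ A, (X - C a)) * Q) {a : K} (ha : a ∈ A) :
    algebraMap K E a ∈ q.rootSet E := by
  rw [mem_rootSet, ← aeval_map_algebraMap K, h, map_mul, map_prod,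
    Finset.prod_eq_zero ha (by simp), zero_mul]
  exact ⟨hq, rfl⟩

theorem exists_algEquiv_apply_eq [Normal K E] {Q : K[X]} (hmonic : Q.Monic) (hirr : Irreducible Q)
    {x y : E} (hx : aeval x Q = 0) (hy : aeval y Q = 0) : ∃ σ : Gal(E/K), σ x = y := by
  refine isConjRoot_iff_exists_algEquiv.mp ?_
  rw [IsConjRoot, ← minpoly.eq_of_irreducible_of_monic hirr hx hmonic,
    ← minpoly.eq_of_irreducible_of_monic hirr hy hmonic]

theorem aeval_algebraMap_ne_zero_of_mem_monicIrreducibles {d : ℕ} (hd : 2 ≤ d) {Q : K[X]}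
    (hQ : Q ∈ monicIrreducibles K d) (a : K) : aeval (algebraMap K E a) Q ≠ 0 := fun ha ↦ by
  rw [aeval_algebraMap_apply, FaithfulSMul.algebraMap_eq_zero_iff, coe_aeval_eq_eval] at ha
  have hroot : a ∈ Q.roots := (mem_roots hQ.1.ne_zero).mpr ha
  simp [roots_eq_zero_of_mem_monicIrreducibles hd hQ] at hroot

theorem exists_root_pair_of_natDegree_eq_two {Q : K[X]} (hsep : Q.Separable)
    (hsplits : (Q.map (algebraMap K E)).Splits) (hdeg : Q.natDegree = 2) :
    ∃ β γ : E, β ≠ γ ∧ ∀ x, aeval x Q = 0 ↔ x = β ∨ x = γ := by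
  have hcard : (Q.rootSet E).ncard = 2 := by
    rw [← Nat.card_coe_set_eq, Nat.card_eq_fintype_card, card_rootSet_eq_natDegree hsep hsplits,
      hdeg]
  obtain ⟨β, γ, hne, hset⟩ := Set.ncard_eq_two.mp hcard
  refine ⟨β, γ, hne, fun x ↦ ?_⟩
  rw [← mem_rootSet_of_ne hsep.ne_zero, hset, Set.mem_insert_iff, Set.mem_singleton_iff]

section Action

variable [Fact (q.map (algebraMap F E)).Splits]

theorem coe_restrict_smul (σ : Gal(E/K)) (x : q.rootSet E) :
    ((Gal.restrict q E (σ.restrictScalars F) • x : q.rootSet E) : E) = σ x :=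
  Gal.galActionHom_restrict q E (σ.restrictScalars F) x

theorem isMultiplyPretransitive_two_of_hasCycleFactorization [Normal K E] (hq : Irreducible q)
    {d : ℕ} (hdeg : q.natDegree = d + 1) (h : HasCycleFactorization d (q.map (algebraMap F K))) :
    IsMultiplyPretransitive q.Gal (q.rootSet E) 2 := by
  obtain ⟨A, Q, hQ, hfQ⟩ := h
  have hA : A.card = 1 := by
    have := natDegree_eq_of_eq_prod_X_sub_C_mul hQ hfQ
    rw [natDegree_map] at this
    lia
  obtain ⟨α, rfl⟩ := Finset.card_eq_one.mp hA
  let a : q.rootSet E := ⟨algebraMap K E α, algebraMap_mem_rootSet_of_eq_prod_X_sub_C_mul hq.ne_zero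
    hfQ (Finset.mem_singleton_self α)⟩
  have hroot {b : q.rootSet E} (hb : b ≠ a) : aeval (b : E) Q = 0 := by
    refine (eq_algebraMap_or_aeval_eq_zero hfQ (mem_rootSet.mp b.2).2).resolve_left ?_
    rintro ⟨α', hα', hb'⟩
    rw [Finset.mem_singleton.mp hα'] at hb'
    exact hb (Subtype.ext hb')
  have := Gal.galAction_isPretransitive q E hq
  rw [SubMulAction.ofStabilizer.isMultiplyPretransitive (a := a), is_one_pretransitive_iff]
  refine ⟨fun b c ↦ ?_⟩
  obtain ⟨σ, hσ⟩ := exists_algEquiv_apply_eq hQ.1 hQ.2.1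
    (hroot ((SubMulAction.mem_ofStabilizer_iff _ a).mp b.2))
    (hroot ((SubMulAction.mem_ofStabilizer_iff _ a).mp c.2))
  have hfix : Gal.restrict q E (σ.restrictScalars F) • a = a :=
    Subtype.ext ((coe_restrict_smul σ a).trans (σ.commutes α))
  exact ⟨⟨_, hfix⟩, Subtype.ext (Subtype.ext ((coe_restrict_smul σ b.1).trans hσ))⟩

open scoped Classical in
theorem exists_isSwap_galActionHom_of_hasCycleFactorization_two [Normal K E]
    (hq : q.Separable) (h : HasCycleFactorization 2 (q.map (algebraMap F K))) :
    ∃ g, (Gal.galActionHom q E g).IsSwap := by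
  obtain ⟨A, Q, hQ, hfQ⟩ := h
  have hsep : Q.Separable := hq.map.of_dvd (hfQ ▸ dvd_mul_left ..)
  have hsplits : (Q.map (algebraMap K E)).Splits := by
    have hqE : (q.map (algebraMap F E)).Splits := Fact.out
    refine hqE.of_dvd hq.map.ne_zero ?_
    rw [IsScalarTower.algebraMap_eq F K E, ← map_map, hfQ, Polynomial.map_mul]
    exact dvd_mul_left ..
  obtain ⟨β, γ, hne, hroots⟩ := exists_root_pair_of_natDegree_eq_two hsep hsplits hQ.2.2
  have hβ : aeval β Q = 0 := (hroots β).mpr (.inl rfl)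
  have hγ : aeval γ Q = 0 := (hroots γ).mpr (.inr rfl)
  have hbase (a : K) : aeval (algebraMap K E a) Q ≠ 0 :=
    aeval_algebraMap_ne_zero_of_mem_monicIrreducibles le_rfl hQ a
  obtain ⟨σ, hσβ⟩ := exists_algEquiv_apply_eq hQ.1 hQ.2.1 hβ hγ
  have hσγ : σ γ = β := by
    have hroot : aeval (σ γ) Q = 0 := by
      rw [aeval_algEquiv, AlgHom.comp_apply, hγ, map_zero]
    refine ((hroots _).mp hroot).resolve_right fun h ↦ hne (σ.injective (hσβ.trans h.symm))
  let b : q.rootSet E := ⟨β, mem_rootSet_of_eq_prod_X_sub_C_mul hq.ne_zero hfQ hβ⟩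
  let c : q.rootSet E := ⟨γ, mem_rootSet_of_eq_prod_X_sub_C_mul hq.ne_zero hfQ hγ⟩
  refine ⟨Gal.restrict q E (σ.restrictScalars F), b, c, fun h ↦ hne (congrArg Subtype.val h), ?_⟩
  ext x
  rw [Gal.galActionHom_restrict]
  change σ x = _
  rcases eq_algebraMap_or_aeval_eq_zero hfQ (mem_rootSet.mp x.2).2 with ⟨a, -, hxa⟩ | hx
  · have hxb : x ≠ b := fun h ↦ hbase a (by rw [← hxa, h]; exact hβ)
    have hxc : x ≠ c := fun h ↦ hbase a (by rw [← hxa, h]; exact hγ)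
    rw [Equiv.swap_apply_of_ne_of_ne hxb hxc, hxa, σ.commutes]
  · rcases (hroots x).mp hx with hxβ | hxγ
    · rw [show x = b from Subtype.ext hxβ, Equiv.swap_apply_left]
      exact hσβ
    · rw [show x = c from Subtype.ext hxγ, Equiv.swap_apply_right]
      exact hσγ

section Transfer

variable (E) (E' : Type*) [Field E'] [Algebra F E'] [Fact (q.map (algebraMap F E')).Splits]

/-- The bijection between the root sets of `q` in two fields splitting it which identifies the
actions of the Galois group of `q`. -/
noncomputable def rootSetEquiv : q.rootSet E ≃ q.rootSet E' :=
  (Gal.rootsEquivRoots q E).symm.trans (Gal.rootsEquivRoots q E')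

variable {E}

theorem rootSetEquiv_smul (g : q.Gal) (x : q.rootSet E) :
    rootSetEquiv E E' (g • x) = g • rootSetEquiv E E' x := by
  simp [rootSetEquiv, Gal.smul_def q E, Gal.smul_def q E']

variable (E) in
theorem isPreprimitive_rootSet_iff :
    IsPreprimitive q.Gal (q.rootSet E) ↔ IsPreprimitive q.Gal (q.rootSet E') :=
  isPreprimitive_congr (φ := id) (f := ⟨rootSetEquiv E E', rootSetEquiv_smul E'⟩)
    Function.surjective_id (rootSetEquiv E E').bijective

open scoped Classical in
theorem isSwap_galActionHom {g : q.Gal} (hg : (Gal.galActionHom q E g).IsSwap) :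
    (Gal.galActionHom q E' g).IsSwap := by
  obtain ⟨x, y, hxy, hg⟩ := hg
  refine ⟨rootSetEquiv E E' x, rootSetEquiv E E' y, (rootSetEquiv E E').injective.ne hxy, ?_⟩
  rw [← Equiv.symm_trans_swap_trans, ← hg]
  ext z
  change _ = ((rootSetEquiv E E' (g • (rootSetEquiv E E').symm z) : q.rootSet E') : E')
  rw [rootSetEquiv_smul, Equiv.apply_symm_apply]
  rfl

end Transfer

open scoped Classical in
theorem galActionHom_bijective_of_isPreprimitive_of_isSwap
    (hprim : IsPreprimitive q.Gal (q.rootSet E)) {g : q.Gal}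
    (hg : (Gal.galActionHom q E g).IsSwap) : Function.Bijective (Gal.galActionHom q E) := by
  refine ⟨Gal.galActionHom_injective q E, MonoidHom.range_eq_top.mp ?_⟩
  have hrange : IsPreprimitive (Gal.galActionHom q E).range (q.rootSet E) :=
    (isPreprimitive_congr (φ := (Gal.galActionHom q E).rangeRestrict) (f := ⟨id, fun _ _ ↦ rfl⟩)
      (Gal.galActionHom q E).rangeRestrict_surjective Function.bijective_id).mp hprim
  exact Equiv.Perm.subgroup_eq_top_of_isPreprimitive_of_isSwap_mem hrange _ hg ⟨g, rfl⟩

end Action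

end GaloisGroups

section SymmetricGaloisGroup

open Polynomial MulAction

/-- `q` has `natDegree q` distinct roots in its splitting field, and its Galois group acts on them
as the full symmetric group. -/
def HasSymmetricGaloisGroup {F : Type*} [Field F] (q : F[X]) : Prop :=
  (q.rootSet q.SplittingField).ncard = q.natDegree ∧
    Function.Bijective
      (@Gal.galActionHom F _ q q.SplittingField _ _ ⟨SplittingField.splits q⟩)

theorem isPreprimitive_rootSet_of_hasCycleFactorization (K : Type*) {F E : Type*} [Field F]
    [Field K] [Algebra F K] [Field E] [Algebra F E] {q : F[X]}
    [Fact (q.map (algebraMap F E)).Splits] (hq : Irreducible q)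
    (h : HasCycleFactorization (q.natDegree - 1) (q.map (algebraMap F K))) :
    IsPreprimitive q.Gal (q.rootSet E) := by
  have : Fact (q.map (algebraMap F (AlgebraicClosure K))).Splits := ⟨IsAlgClosed.splits _⟩
  exact (isPreprimitive_rootSet_iff (AlgebraicClosure K) E).mp
    (isPreprimitive_of_is_two_pretransitive
      (isMultiplyPretransitive_two_of_hasCycleFactorization hq
        (Nat.sub_add_cancel hq.natDegree_pos).symm h))

theorem isPreprimitive_rootSet_of_prime_natDegree {F E : Type*} [Field F] [Field E] [Algebra F E]
    {q : F[X]} [Fact (q.map (algebraMap F E)).Splits] (hq : Irreducible q) (hsep : q.Separable)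
    (hprime : q.natDegree.Prime) : IsPreprimitive q.Gal (q.rootSet E) := by
  have := Gal.galAction_isPretransitive q E hq
  refine IsPreprimitive.of_prime_card ?_
  rwa [Nat.card_eq_fintype_card, card_rootSet_eq_natDegree hsep Fact.out]

theorem hasSymmetricGaloisGroup_of_irreducible (K K' : Type*) {F : Type*} [Field F] [Field K]
    [Field K'] [Algebra F K] [Algebra F K'] {q : F[X]} (hq : Irreducible q) (hsep : q.Separable)
    (h₁ : q.natDegree.Prime ∨
      HasCycleFactorization (q.natDegree - 1) (q.map (algebraMap F K)))
    (h₂ : HasCycleFactorization 2 (q.map (algebraMap F K'))) : HasSymmetricGaloisGroup q := by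
  have hsplits := Fact.mk (SplittingField.splits q)
  have : Fact (q.map (algebraMap F (AlgebraicClosure K'))).Splits := ⟨IsAlgClosed.splits _⟩
  have hprim : IsPreprimitive q.Gal (q.rootSet q.SplittingField) := h₁.elim
    (isPreprimitive_rootSet_of_prime_natDegree hq hsep)
    (isPreprimitive_rootSet_of_hasCycleFactorization K hq)
  obtain ⟨g, hg⟩ := exists_isSwap_galActionHom_of_hasCycleFactorization_two
    (E := AlgebraicClosure K') hsep h₂
  refine ⟨?_, galActionHom_bijective_of_isPreprimitive_of_isSwap hprim (isSwap_galActionHom _ hg)⟩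
  rw [← Nat.card_coe_set_eq, Nat.card_eq_fintype_card, card_rootSet_eq_natDegree hsep hsplits.out]

theorem hasSymmetricGaloisGroup_of_hasCycleFactorization {f : ℤ[X]} (hf : f.Monic)
    (hroots : ∀ a, ¬ f.IsRoot a)
    (h₁ : 3 ≤ f.natDegree → ∃ p : ℕ, p.Prime ∧
      HasCycleFactorization (f.natDegree - 1) (f.map (Int.castRingHom (ZMod p))))
    (h₂ : ∃ p : ℕ, p.Prime ∧ HasCycleFactorization 2 (f.map (Int.castRingHom (ZMod p)))) :
    HasSymmetricGaloisGroup (f.map (algebraMap ℤ ℚ)) := by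
  obtain ⟨p, hp, h₂⟩ := h₂
  have := Fact.mk hp
  have h₂' := hasCycleFactorization_map_padic hf le_rfl h₂
  have hirr_of {d r : ℕ} [Fact r.Prime] (hd : 0 < d) (hdeg : f.natDegree ≤ d + 1)
      (h : HasCycleFactorization d (f.map (Int.castRingHom (ZMod r)))) :
      Irreducible (f.map (algebraMap ℤ ℚ)) :=
    hf.irreducible_iff_irreducible_map_fraction_map.mp
      (irreducible_of_hasCycleFactorization_map _ hf hroots hd hdeg h)
  rcases le_or_gt 3 f.natDegree with hdeg | hdeg
  · obtain ⟨ℓ, hℓ, h₁⟩ := h₁ hdeg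
    have := Fact.mk hℓ
    have hirr := hirr_of (by lia) (by lia) h₁
    refine hasSymmetricGaloisGroup_of_irreducible ℚ_[ℓ] ℚ_[p] hirr hirr.separable (.inr ?_) h₂'
    rw [hf.natDegree_map]
    exact hasCycleFactorization_map_padic hf (by lia) h₁
  · have hirr := hirr_of two_pos hdeg.le h₂
    have hdeg2 : f.natDegree = 2 := by
      obtain ⟨A, Q, hQ, hfQ⟩ := h₂
      have := natDegree_eq_of_eq_prod_X_sub_C_mul hQ hfQ
      rw [hf.natDegree_map] at this
      lia
    refine hasSymmetricGaloisGroup_of_irreducible ℚ_[p] ℚ_[p] hirr hirr.separable (.inl ?_) h₂'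
    rw [hf.natDegree_map, hdeg2]
    exact Nat.prime_two

end SymmetricGaloisGroup

section Main

open Polynomial Matrix Filter

theorem isUnit_charpoly_coeff_zero {ι R : Type*} [Fintype ι] [DecidableEq ι] [CommRing R]
    (g : SpecialLinearGroup ι R) : IsUnit ((g : Matrix ι ι R).charpoly.coeff 0) := by
  have h := det_eq_sign_charpoly_coeff (g : Matrix ι ι R)
  rw [g.det_coe] at h
  exact .of_mul_eq_one_right _ h.symm

theorem stmt11_general {ι ω : Type*} [Fintype ι] [DecidableEq ι] [Nontrivial ι] [Fintype ω]
    {s : ω → SpecialLinearGroup ι ℤ} {N : ℕ}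
    (hs : HasStrongApproximation N (Subgroup.closure (Set.range s))) :
    Tendsto (wordFrequency s {g | HasSymmetricGaloisGroup
      ((g : Matrix ι ι ℤ).charpoly.map (algebraMap ℤ ℚ))}) atTop (nhds 1) := by
  have : Nonempty ω := not_isEmpty_iff.mp fun _ ↦ hs.ne_bot (by simp)
  have hlong : ∀ᶠ g : SpecialLinearGroup ι ℤ in almostEveryWord s, 3 ≤ Fintype.card ι →
      ∃ p : ℕ, p.Prime ∧ HasCycleFactorization (Fintype.card ι - 1)
        ((g : Matrix ι ι ℤ).charpoly.map (Int.castRingHom (ZMod p))) :=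
    eventually_imp_distrib_left.mpr fun hι ↦ eventually_exists_hasCycleFactorization hι hs
  refine tendsto_wordFrequency_of_mem_almostEveryWord ?_
  filter_upwards [hlong, eventually_exists_hasCycleFactorization_two hs {1, -1}]
    with g hlong ⟨p, hp, hswap, hroots⟩
  have hnot (b : ℤ) (hb : b ∈ ({1, -1} : Finset ℤ)) : ¬ (g : Matrix ι ι ℤ).charpoly.IsRoot b :=
    fun h ↦ hroots b hb (by simpa using h.map (f := Int.castRingHom (ZMod p)))
  refine hasSymmetricGaloisGroup_of_hasCycleFactorization (charpoly_monic _)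
    (not_isRoot_of_isUnit_coeff_zero (isUnit_charpoly_coeff_zero g) (hnot 1 (by simp))
      (hnot (-1) (by simp))) ?_ ⟨p, hp, hswap⟩
  rwa [charpoly_natDegree_eq_dim]

end Main

open scoped Classical in
/-- the proportion of words of length `L` in a finite generating
set of `SL(n, ℤ)` whose product has characteristic polynomial with full
symmetric Galois group over `ℚ` tends to `1` as `L → ∞`. -/
theorem stmt11 (n : ℕ) (hn : 2 ≤ n)
    (S : Finset (Matrix.SpecialLinearGroup (Fin n) ℤ))
    (hS : Subgroup.closure (S : Set (Matrix.SpecialLinearGroup (Fin n) ℤ)) = ⊤) :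
    Filter.Tendsto (fun L : ℕ =>
        ((Finset.univ.filter (fun w : Fin L → {x // x ∈ S} =>
            let q : Polynomial ℚ :=
              (Matrix.charpoly
                  (((List.ofFn fun i => (w i : Matrix.SpecialLinearGroup (Fin n) ℤ)).prod :
                      Matrix.SpecialLinearGroup (Fin n) ℤ) :
                    Matrix (Fin n) (Fin n) ℤ)).map (algebraMap ℤ ℚ)
            Set.ncard (q.rootSet q.SplittingField) = n ∧
              Function.Bijective
                (@Polynomial.Gal.galActionHom ℚ _ q q.SplittingField _ _
                  ⟨Polynomial.SplittingField.splits q⟩))).card : ℝ) /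
        ((S.card : ℝ) ^ L))
      Filter.atTop (nhds 1) := by
  have : Nontrivial (Fin n) := Fin.nontrivial_iff_two_le.mpr hn
  have hs : HasStrongApproximation 0
      (Subgroup.closure (Set.range ((↑) : S → Matrix.SpecialLinearGroup (Fin n) ℤ))) := by
    simpa [hS] using HasStrongApproximation.top
  refine (stmt11_general hs).congr fun L ↦ ?_
  simp only [wordFrequency, wordProd, HasSymmetricGaloisGroup, Set.mem_ofPred_eq, Fintype.card_coe,
    (Matrix.charpoly_monic _).natDegree_map, Matrix.charpoly_natDegree_eq_dim, Fintype.card_fin]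
  congr!
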